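/- Let G be a connected simple graph on n vertices, fix an orientation of its edges, let N be the resulting n×m signed vertex-edge incidence matrix, and let L = N·Nᵀ be the Laplacian of G. Then the (n−1)-dimensional Hausdorff measure of the zonotope Z(L) equals n times the (n−1)-dimensional Hausdorff measure of the zonotope Z(N). (Both zonotopes lie in the hyperplane of ℝⁿ orthogonal to the all-ones vector.) -/

import Mathlib

open MeasureTheory

/-- The zonotope generated by a `d × k` real matrix, viewed inside Euclidean
space `ℝ^d` (so that Hausdorff measures are taken w.r.t. the Euclidean
metric): the image of the unit cube `[0,1]^k` under `x ↦ M x`. -/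
def zonotopeE {d k : ℕ} (M : Matrix (Fin d) (Fin k) ℝ) : Set (EuclideanSpace ℝ (Fin d)) :=
  {y | ∃ x : Fin k → ℝ, (∀ i, x i ∈ Set.Icc (0 : ℝ) 1) ∧
    y = (WithLp.equiv 2 (Fin d → ℝ)).symm (M.mulVec x)}

/-!
Let `S` be the incidence matrix of a star on the vertices and `R` the matrix `N` without its first
row. As the columns of `N` sum to zero, `N = S R`, so `Z(N) = S Z(R)` and `Z(L) = S (R Rᵀ) Z(Sᵀ)`.
The linear map `S` scales volume by a constant factor, so it remains to see that
`det (R Rᵀ) * vol Z(Sᵀ) = n * vol Z(R)`.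

A totally unimodular `A` satisfies `vol Z(A) = det (A Aᵀ)`. Instead of comparing the sums over
maximal minors given by Shephard's and Cauchy–Binet's formulas, normalize the first column to a unit
vector `e`: both sides then obey the same deletion–contraction recursion, because adding the segment
`[0, e]` to a convex body increases its volume by that of its shadow along `e`. Hence
`vol Z(R) = det (R Rᵀ)` and `vol Z(Sᵀ) = det (Sᵀ S) = n`.
-/

open Matrix Set
open scoped Pointwise ENNReal

section Determinants

variable {ι : Type*}

lemma mul_transpose_of_col_eq_zero {R : Type*} [NonUnitalNonAssocSemiring R] {k : ℕ}
    {A : Matrix ι (Fin (k + 1)) R} (hA : A.col 0 = 0) :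
    A.submatrix id Fin.succ * (A.submatrix id Fin.succ)ᵀ = A * Aᵀ := by
  have entry (i) : A i 0 = 0 := congrFun hA i
  ext i j
  simp [mul_apply, Fin.sum_univ_succ, entry]

variable {R : Type*} [CommRing R]

lemma det_eq_of_col_eq_single {k : ℕ} {A : Matrix (Fin (k + 1)) (Fin (k + 1)) R}
    {i j : Fin (k + 1)} {s : R} (hA : A.col j = Pi.single i s) :
    A.det = (-1) ^ (i + j : ℕ) * s * (A.submatrix i.succAbove j.succAbove).det := by
  have entry (i' : Fin (k + 1)) : A i' j = Pi.single (M := fun _ => R) i s i' := congrFun hA i'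
  rw [det_succ_column A j, Fintype.sum_eq_single i fun i' hi' => by simp [entry, hi'],
    entry, Pi.single_eq_same]

lemma det_eq_zero_of_one_vecMul_eq_zero [Fintype ι] [DecidableEq ι] [Nonempty ι]
    {A : Matrix ι ι R} (hA : 1 ᵥ* A = 0) : A.det = 0 := by
  inhabit ι
  have smul_eq : A.det • (1 : ι → R) = 0 := by
    rw [← vecMul_one 1, ← vecMul_smul, ← mul_adjugate, ← vecMul_vecMul, hA, zero_vecMul]
  simpa using congrFun smul_eq default

lemma det_mul_transpose_of_col_eq_single {d k : ℕ}
    {A : Matrix (Fin (d + 1)) (Fin (k + 1)) R} (hA : A.col 0 = Pi.single 0 1) :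
    (A * Aᵀ).det = (A.submatrix id Fin.succ * (A.submatrix id Fin.succ)ᵀ).det +
      (A.submatrix Fin.succ Fin.succ * (A.submatrix Fin.succ Fin.succ)ᵀ).det := by
  set M := A.submatrix id Fin.succ * (A.submatrix id Fin.succ)ᵀ with hM
  have entry (i) : A i 0 = (Pi.single 0 1 : Fin (d + 1) → R) i := congrFun hA i
  have gram_eq : A * Aᵀ = M.updateCol 0 (M.col 0 + Pi.single 0 1) := by
    ext i j
    refine j.cases ?_ fun j => ?_
    · simp [hM, mul_apply, Fin.sum_univ_succ, entry, add_comm]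
    · simp [hM, mul_apply, Fin.sum_univ_succ, entry]
  have single_col : (M.updateCol 0 (Pi.single 0 1)).col 0 = Pi.single 0 1 := by
    ext
    simp
  have minor_eq : (M.updateCol 0 (Pi.single 0 1)).submatrix (Fin.succAbove 0) (Fin.succAbove 0) =
      A.submatrix Fin.succ Fin.succ * (A.submatrix Fin.succ Fin.succ)ᵀ := by
    ext i j
    simp [hM, mul_apply]
  have self_eq : M.updateCol 0 (M.col 0) = M := M.updateCol_eq_self 0
  rw [gram_eq, det_updateCol_add, det_eq_of_col_eq_single single_col, minor_eq, self_eq]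
  simp

lemma exists_isUnit_det_mulVec_eq [Fintype ι] [DecidableEq ι] {v w : ι → ℝ}
    (hv : v ≠ 0) (hw : w ≠ 0) : ∃ g : Matrix ι ι ℝ, IsUnit g.det ∧ g *ᵥ v = w := by
  obtain ⟨e, he⟩ := SeparatingDual.exists_continuousLinearEquiv_apply_eq (R := ℝ) hv hw
  refine ⟨e.toLinearEquiv.toLinearMap.toMatrix', ?_, ?_⟩
  · rw [LinearMap.det_toMatrix']
    exact e.toLinearEquiv.isUnit_det'
  · rw [LinearMap.toMatrix'_mulVec]
    exact he

end Determinants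

section Incidence

variable {V E : Type*} [DecidableEq V]

/-- The incidence matrix over `R` of the directed multigraph with vertices `V` and edges `E` given
by its endpoint maps: column `e` is `1` at the head of `e` and `-1` at its tail. Writing it as a
difference makes the column of a loop vanish. -/
def signedIncidence (R : Type*) [Ring R] (head tail : E → V) : Matrix V E R :=
  of fun v e => (Pi.single (head e) 1 - Pi.single (tail e) 1 : V → R) v

section Ring

variable {R : Type*} [Ring R]

lemma signedIncidence_eq_ite {head tail : E → V}
    (hne : ∀ e, head e ≠ tail e) :
    signedIncidence R head tail =
      fun v e => if v = head e then 1 else if v = tail e then -1 else 0 := by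
  ext v e
  have : head e ≠ tail e := hne e
  simp only [signedIncidence, of_apply, Pi.sub_apply, Pi.single_apply]
  grind

lemma one_vecMul_signedIncidence [Fintype V] (head tail : E → V) :
    1 ᵥ* signedIncidence R head tail = 0 := by
  ext e
  simp [signedIncidence, vecMul, dotProduct]

lemma single_comp_of_notMem_range {M ι : Type*} [Zero M] {f : ι → V} {v : V} (hv : v ∉ range f)
    (a : M) : (Pi.single v a : V → M) ∘ f = 0 :=
  Function.update_comp_eq_of_forall_ne _ _ fun i hi => hv ⟨i, hi⟩

lemma single_comp_of_injective {M ι : Type*} [Zero M] [DecidableEq ι] {f : ι → V}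
    (hf : f.Injective) (i : ι) (a : M) : (Pi.single (f i) a : V → M) ∘ f = Pi.single i a :=
  Function.update_comp_eq_of_injective _ hf _ _

lemma one_vecMul_signedIncidence_submatrix {ι κ : Type*} [Fintype ι] {head tail : E → V}
    {f : ι → V} {g : κ → E} (hf : f.Injective)
    (hends : ∀ j, head (g j) ∈ range f ∧ tail (g j) ∈ range f) :
    1 ᵥ* (signedIncidence R head tail).submatrix f g = 0 := by
  classical
  ext j
  obtain ⟨⟨a, ha⟩, ⟨b, hb⟩⟩ := hends j
  simp [signedIncidence, vecMul, dotProduct, ← ha, ← hb, Pi.single_apply, hf.eq_iff]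

lemma exists_signedIncidence_submatrix_col_eq_single {ι κ : Type*} [DecidableEq ι] [Nonempty ι]
    {head tail : E → V} {f : ι → V} {g : κ → E} {j : κ} (hf : f.Injective)
    (hends : ¬ (head (g j) ∈ range f ∧ tail (g j) ∈ range f)) :
    ∃ i, ∃ s : SignType,
      ((signedIncidence R head tail).submatrix f g).col j = Pi.single i (s : R) := by
  have col_eq : ((signedIncidence R head tail).submatrix f g).col j =
      (Pi.single (head (g j)) 1 : V → R) ∘ f - (Pi.single (tail (g j)) 1 : V → R) ∘ f := rfl
  rw [col_eq]
  rcases not_and_or.mp hends with hhead | htail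
  · rw [single_comp_of_notMem_range hhead, zero_sub]
    by_cases htail : tail (g j) ∈ range f
    · obtain ⟨i, hi⟩ := htail
      exact ⟨i, -1, by simp [← hi, single_comp_of_injective hf, Pi.single_neg]⟩
    · exact ⟨Classical.arbitrary ι, 0, by simp [single_comp_of_notMem_range htail]⟩
  · rw [single_comp_of_notMem_range htail, sub_zero]
    by_cases hhead : head (g j) ∈ range f
    · obtain ⟨i, hi⟩ := hhead
      exact ⟨i, 1, by simp [← hi, single_comp_of_injective hf]⟩
    · exact ⟨Classical.arbitrary ι, 0, by simp [single_comp_of_notMem_range hhead]⟩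

end Ring

lemma isTotallyUnimodular_signedIncidence {R : Type*} [CommRing R] (head tail : E → V) :
    (signedIncidence R head tail).IsTotallyUnimodular := by
  intro k f g hf hg
  induction k with
  | zero => exact ⟨1, by simp⟩
  | succ k ih =>
    by_cases hends : ∀ j, head (g j) ∈ range f ∧ tail (g j) ∈ range f
    · exact ⟨0, by
        simp [det_eq_zero_of_one_vecMul_eq_zero (one_vecMul_signedIncidence_submatrix hf hends)]⟩
    · obtain ⟨j, hj⟩ := not_forall.mp hends
      obtain ⟨i, s, hcol⟩ := exists_signedIncidence_submatrix_col_eq_single (R := R) hf hj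
      obtain ⟨t, ht⟩ := ih (f ∘ i.succAbove) (g ∘ j.succAbove)
        (hf.comp Fin.succAbove_right_injective) (hg.comp Fin.succAbove_right_injective)
      refine ⟨(-1) ^ (i + j : ℕ) * s * t, ?_⟩
      have cast_sign : (((-1) ^ (i + j : ℕ) : SignType) : R) = (-1) ^ (i + j : ℕ) := by simp
      rw [det_eq_of_col_eq_single hcol, submatrix_submatrix, ← ht, SignType.coe_mul,
        SignType.coe_mul, cast_sign]

end Incidence

section Slicing

variable {d : ℕ}

lemma volume_unitInterval_add {T : Set ℝ} (hcompact : IsCompact T) (hconvex : Convex ℝ T)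
    (hne : T.Nonempty) : volume (Icc 0 1 + T) = volume T + 1 := by
  obtain ⟨a, b, rfl⟩ : ∃ a b, T = Icc a b :=
    ⟨_, _, eq_Icc_of_connected_compact ⟨hne, hconvex.isPreconnected⟩ hcompact⟩
  have hab : a ≤ b := nonempty_Icc.mp hne
  rw [Icc_add_Icc zero_le_one hab, Real.volume_Icc, Real.volume_Icc, ← ENNReal.ofReal_one,
    ← ENNReal.ofReal_add (sub_nonneg.mpr hab) zero_le_one]
  ring_nf

lemma volume_eq_lintegral_vecCons {S : Set (Fin (d + 1) → ℝ)} (hS : MeasurableSet S) :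
    volume S = ∫⁻ y : Fin d → ℝ, volume {t : ℝ | vecCons t y ∈ S} := by
  have hpres := (volume_preserving_piFinSuccAbove (fun _ : Fin (d + 1) => ℝ) 0).symm
  rw [← hpres.measure_preimage hS.nullMeasurableSet, Measure.volume_eq_prod,
    Measure.prod_apply_symm (hpres.measurable hS)]
  simp only [preimage, MeasurableEquiv.piFinSuccAbove_symm_apply, Fin.insertNthEquiv_zero]
  rfl

lemma segment_zero_single (i : Fin d) :
    segment ℝ 0 (Pi.single i 1 : Fin d → ℝ) = Pi.single i '' Icc 0 1 := by
  simp [segment_eq_image', ← Pi.single_smul]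

lemma setOf_vecCons_mem_segment_add (K : Set (Fin (d + 1) → ℝ)) (y : Fin d → ℝ) :
    {t : ℝ | vecCons t y ∈ segment ℝ 0 (Pi.single 0 1) + K} =
      Icc 0 1 + {t : ℝ | vecCons t y ∈ K} := by
  have sub_eq (t s : ℝ) : vecCons t y - Pi.single 0 s = vecCons (t - s) y := by
    ext i
    refine i.cases ?_ fun i => ?_ <;> simp
  ext t
  simp only [segment_zero_single, mem_add, mem_image, exists_exists_and_eq_and, mem_ofPred_eq,
    ← eq_sub_iff_add_eq', sub_eq, exists_eq_right]

lemma isCompact_setOf_vecCons_mem {K : Set (Fin (d + 1) → ℝ)} (hK : IsCompact K)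
    (y : Fin d → ℝ) : IsCompact {t : ℝ | vecCons t y ∈ K} := by
  exact (hK.image (continuous_apply 0)).of_isClosed_subset
    (hK.isClosed.preimage (by fun_prop)) fun t ht => ⟨vecCons t y, ht, rfl⟩

lemma convex_setOf_vecCons_mem {K : Set (Fin (d + 1) → ℝ)} (hK : Convex ℝ K) (y : Fin d → ℝ) :
    Convex ℝ {t : ℝ | vecCons t y ∈ K} := by
  intro t ht s hs a b ha hb hab
  have combo_eq : a • vecCons t y + b • vecCons s y = vecCons (a • t + b • s) y := by
    simp [← add_smul, hab]
  exact mem_ofPred_eq.mpr (combo_eq ▸ hK ht hs ha hb hab)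

lemma setOf_vecCons_mem_nonempty_iff {K : Set (Fin (d + 1) → ℝ)} {y : Fin d → ℝ} :
    {t : ℝ | vecCons t y ∈ K}.Nonempty ↔ y ∈ (· ∘ Fin.succ) '' K := by
  constructor
  · rintro ⟨t, ht⟩
    exact ⟨_, ht, rfl⟩
  · rintro ⟨z, hz, rfl⟩
    exact ⟨z 0, (cons_head_tail z).symm ▸ hz⟩

lemma volume_segment_zero_single_add {K : Set (Fin (d + 1) → ℝ)} (hcompact : IsCompact K)
    (hconvex : Convex ℝ K) :
    volume (segment ℝ 0 (Pi.single 0 1) + K) = volume K + volume ((· ∘ Fin.succ) '' K) := by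
  set shadow : Set (Fin d → ℝ) := (· ∘ Fin.succ) '' K
  have hshadow : MeasurableSet shadow := (hcompact.image (by fun_prop)).measurableSet
  have hsum : IsCompact (segment ℝ 0 (Pi.single 0 1) + K) := by
    rw [segment_zero_single]
    exact (isCompact_Icc.image (continuous_single 0)).add hcompact
  have fibre (y : Fin d → ℝ) :
      volume {t : ℝ | vecCons t y ∈ segment ℝ 0 (Pi.single 0 1) + K} =
        volume {t : ℝ | vecCons t y ∈ K} + shadow.indicator 1 y := by
    rw [setOf_vecCons_mem_segment_add]
    by_cases hy : y ∈ shadow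
    · rw [indicator_of_mem hy, Pi.one_apply, volume_unitInterval_add
        (isCompact_setOf_vecCons_mem hcompact y) (convex_setOf_vecCons_mem hconvex y)
        (setOf_vecCons_mem_nonempty_iff.mpr hy)]
    · have hempty : {t : ℝ | vecCons t y ∈ K} = ∅ :=
        not_nonempty_iff_eq_empty.mp (setOf_vecCons_mem_nonempty_iff.not.mpr hy)
      simp [indicator_of_notMem hy, hempty]
  rw [volume_eq_lintegral_vecCons hsum.measurableSet,
    volume_eq_lintegral_vecCons hcompact.measurableSet, lintegral_congr fibre,
    lintegral_add_right _ (measurable_one.indicator hshadow), lintegral_indicator_one hshadow]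

end Slicing

section Zonotope

variable {ι κ : Type*} [Fintype κ]

/-- The zonotope of `A` in the function space `ι → ℝ`, which carries the product Lebesgue
measure; `zonotopeE` is its copy in Euclidean space. -/
def zonotope (A : Matrix ι κ ℝ) : Set (ι → ℝ) :=
  A.mulVec '' Icc 0 1

lemma isCompact_zonotope (A : Matrix ι κ ℝ) : IsCompact (zonotope A) :=
  isCompact_Icc.image (continuous_const.matrix_mulVec continuous_id)

lemma convex_zonotope (A : Matrix ι κ ℝ) : Convex ℝ (zonotope A) :=
  (convex_Icc _ _).linear_image A.mulVecLin

lemma zonotope_mul {ι' : Type*} [Fintype ι] (g : Matrix ι' ι ℝ) (A : Matrix ι κ ℝ) :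
    zonotope (g * A) = g.mulVec '' zonotope A := by
  simp [zonotope, image_image]

lemma zonotope_submatrix_id {ι' : Type*} (A : Matrix ι κ ℝ) (f : ι' → ι) :
    zonotope (A.submatrix f id) = (· ∘ f) '' zonotope A := by
  rw [zonotope, zonotope, image_image]
  rfl

lemma zonotope_eq_segment_add {k : ℕ} (A : Matrix ι (Fin (k + 1)) ℝ) :
    zonotope A = segment ℝ 0 (A.col 0) + zonotope (A.submatrix id Fin.succ) := by
  have mulVec_eq (x : Fin (k + 1) → ℝ) :
      A *ᵥ x = x 0 • A.col 0 + A.submatrix id Fin.succ *ᵥ (x ∘ Fin.succ) := by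
    ext i
    simp [mulVec, dotProduct, Fin.sum_univ_succ, mul_comm]
  ext y
  simp only [zonotope, segment_eq_image', mem_add, mem_image, mulVec_eq]
  constructor
  · rintro ⟨x, hx, rfl⟩
    exact ⟨_, ⟨x 0, ⟨hx.1 0, hx.2 0⟩, by simp⟩, _,
      ⟨x ∘ Fin.succ, ⟨fun i => hx.1 i.succ, fun i => hx.2 i.succ⟩, rfl⟩, rfl⟩
  · rintro ⟨_, ⟨t, ht, rfl⟩, _, ⟨x, hx, rfl⟩, rfl⟩
    refine ⟨vecCons t x, ?_, by simp [Function.comp_def]⟩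
    simpa [Pi.le_def, Fin.forall_fin_succ, forall_and, and_assoc] using
      ⟨ht.1, hx.1, ht.2, hx.2⟩

lemma volume_zonotope_mul [Fintype ι] [DecidableEq ι] (g : Matrix ι ι ℝ) (A : Matrix ι κ ℝ) :
    volume (zonotope (g * A)) = ENNReal.ofReal |g.det| * volume (zonotope A) := by
  rw [zonotope_mul, ← LinearMap.det_toLin' g]
  exact Measure.addHaar_image_linearMap volume (toLin' g) (zonotope A)

lemma volume_real_zonotope_mul [Fintype ι] [DecidableEq ι] (g : Matrix ι ι ℝ) (A : Matrix ι κ ℝ) :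
    volume.real (zonotope (g * A)) = |g.det| * volume.real (zonotope A) := by
  simp [measureReal_def, volume_zonotope_mul]

lemma volume_real_zonotope_of_col_eq_single {d k : ℕ}
    {A : Matrix (Fin (d + 1)) (Fin (k + 1)) ℝ} (hA : A.col 0 = Pi.single 0 1) :
    volume.real (zonotope A) = volume.real (zonotope (A.submatrix id Fin.succ)) +
      volume.real (zonotope (A.submatrix Fin.succ Fin.succ)) := by
  have hcompact := isCompact_zonotope (A.submatrix id Fin.succ)
  have hshadow := isCompact_zonotope (A.submatrix Fin.succ Fin.succ)
  have image_eq : (· ∘ Fin.succ) '' zonotope (A.submatrix id Fin.succ) =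
      zonotope (A.submatrix Fin.succ Fin.succ) :=
    (zonotope_submatrix_id (A.submatrix id Fin.succ) Fin.succ).symm
  rw [measureReal_def, zonotope_eq_segment_add, hA,
    volume_segment_zero_single_add hcompact (convex_zonotope _), image_eq,
    ENNReal.toReal_add hcompact.measure_ne_top hshadow.measure_ne_top]
  rfl

end Zonotope

section UniformMinors

variable {ι κ : Type*} [Fintype ι] [DecidableEq ι]

/-- All nonzero maximal minors of `A` have absolute value `c`: unimodularity up to a scalar, a
class closed under row operations. The columns of a minor are chosen by an arbitrary function,
since a repeated column only gives the minor `0`. -/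
def HasUniformMinors (A : Matrix ι κ ℝ) (c : ℝ) : Prop :=
  ∀ f : ι → κ, (A.submatrix id f).det = 0 ∨ |(A.submatrix id f).det| = c

variable {A : Matrix ι κ ℝ} {c : ℝ}

lemma HasUniformMinors.submatrix_id {κ' : Type*} (hA : HasUniformMinors A c) (g : κ' → κ) :
    HasUniformMinors (A.submatrix id g) c :=
  fun f => hA (g ∘ f)

lemma HasUniformMinors.mul_left (hA : HasUniformMinors A c) (g : Matrix ι ι ℝ) :
    HasUniformMinors (g * A) (|g.det| * c) := by
  intro f
  have minor_eq : ((g * A).submatrix id f).det = g.det * (A.submatrix id f).det := det_mul _ _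
  rw [minor_eq, abs_mul]
  exact (hA f).imp (fun h => by rw [h, mul_zero]) (fun h => by rw [h])

lemma HasUniformMinors.submatrix_succ_succ {d k : ℕ} {A : Matrix (Fin (d + 1)) (Fin (k + 1)) ℝ}
    (hA : HasUniformMinors A c) (hcol : A.col 0 = Pi.single 0 1) :
    HasUniformMinors (A.submatrix Fin.succ Fin.succ) c := by
  intro f
  have minor_eq : (A.submatrix id (vecCons 0 (Fin.succ ∘ f))).det =
      ((A.submatrix Fin.succ Fin.succ).submatrix id f).det := by
    have comp_succ : vecCons 0 (Fin.succ ∘ f) ∘ Fin.succ = Fin.succ ∘ f := rfl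
    simpa [comp_succ] using det_eq_of_col_eq_single (i := 0) (j := 0)
      (A := A.submatrix id (vecCons 0 (Fin.succ ∘ f))) hcol
  exact minor_eq ▸ hA _

lemma hasUniformMinors_one_of_isTotallyUnimodular (hA : A.IsTotallyUnimodular) :
    HasUniformMinors A 1 := by
  intro f
  obtain ⟨s, hs⟩ := (isTotallyUnimodular_iff_fintype A).mp hA ι id f
  rw [← hs]
  cases s <;> simp

lemma HasUniformMinors.mul_volume_real_zonotope_zero_cols {d : ℕ} {A : Matrix (Fin d) (Fin 0) ℝ}
    (hA : HasUniformMinors A c) : c * volume.real (zonotope A) = (A * Aᵀ).det := by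
  have zonotope_eq : zonotope A = {0} :=
    (subsingleton_of_subsingleton.image _).eq_singleton_of_mem ⟨0, by simp, by simp⟩
  cases d with
  | zero =>
    have hc : c = 1 := by simpa [eq_comm] using hA Fin.elim0
    simp [hc, zonotope_eq, measureReal_def, Measure.volume_pi_eq_dirac 0]
  | succ d => simp [zonotope_eq, measureReal_def]

theorem HasUniformMinors.mul_volume_real_zonotope {d k : ℕ} {A : Matrix (Fin d) (Fin k) ℝ}
    (hA : HasUniformMinors A c) : c * volume.real (zonotope A) = (A * Aᵀ).det := by
  induction k generalizing d c with
  | zero => exact hA.mul_volume_real_zonotope_zero_cols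
  | succ k ih =>
    by_cases hcol : A.col 0 = 0
    · rw [zonotope_eq_segment_add, hcol, segment_same, singleton_zero, zero_add,
        ← mul_transpose_of_col_eq_zero hcol, ih (hA.submatrix_id Fin.succ)]
    obtain _ | d := d
    · exact absurd (Subsingleton.elim _ _) hcol
    obtain ⟨g, hg, hgcol⟩ := exists_isUnit_det_mulVec_eq hcol
      (w := Pi.single (0 : Fin (d + 1)) 1) (by simp)
    have hB : HasUniformMinors (g * A) (|g.det| * c) := hA.mul_left g
    have hBcol : (g * A).col 0 = Pi.single 0 1 := hgcol
    have normalized : |g.det| * c * volume.real (zonotope (g * A)) = (g * A * (g * A)ᵀ).det := by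
      rw [volume_real_zonotope_of_col_eq_single hBcol, mul_add, ih (hB.submatrix_id Fin.succ),
        ih (hB.submatrix_succ_succ hBcol), det_mul_transpose_of_col_eq_single hBcol]
    have gram_eq : (g * A * (g * A)ᵀ).det = |g.det| ^ 2 * (A * Aᵀ).det := by
      rw [transpose_mul, Matrix.mul_assoc, ← Matrix.mul_assoc A, det_mul, det_mul,
        det_transpose, sq_abs]
      ring
    rw [volume_real_zonotope_mul, gram_eq] at normalized
    refine mul_left_cancel₀ (pow_ne_zero 2 (abs_ne_zero.mpr hg.ne_zero)) ?_
    linear_combination normalized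

theorem volume_zonotope_of_isTotallyUnimodular {d k : ℕ} {A : Matrix (Fin d) (Fin k) ℝ}
    (hA : A.IsTotallyUnimodular) : volume (zonotope A) = ENNReal.ofReal (A * Aᵀ).det := by
  rw [← (hasUniformMinors_one_of_isTotallyUnimodular hA).mul_volume_real_zonotope, one_mul,
    ofReal_measureReal (isCompact_zonotope A).measure_ne_top]

end UniformMinors

section Hausdorff

variable {n d k : ℕ}

lemma zonotopeE_eq_preimage (A : Matrix (Fin d) (Fin k) ℝ) :
    zonotopeE A = WithLp.ofLp ⁻¹' zonotope A := by
  ext y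
  simp only [zonotopeE, zonotope, mem_Icc, Pi.le_def, forall_and, mem_ofPred_eq, mem_preimage,
    mem_image]
  exact exists_congr fun x => and_congr_right fun _ =>
    ⟨fun h => h ▸ rfl, fun h => (WithLp.ofLp_injective 2 h).symm⟩

lemma zonotopeE_mul (P : Matrix (Fin n) (Fin d) ℝ) (A : Matrix (Fin d) (Fin k) ℝ) :
    zonotopeE (P * A) = P.toEuclideanLin '' zonotopeE A := by
  ext y
  simp only [zonotopeE, mem_image, mem_ofPred_eq]
  constructor
  · rintro ⟨x, hx, rfl⟩
    exact ⟨_, ⟨x, hx, rfl⟩, by simp⟩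
  · rintro ⟨_, ⟨x, hx, rfl⟩, rfl⟩
    exact ⟨x, hx, by simp⟩

lemma volume_zonotopeE (A : Matrix (Fin d) (Fin k) ℝ) :
    volume (zonotopeE A) = volume (zonotope A) := by
  rw [zonotopeE_eq_preimage, (PiLp.volume_preserving_ofLp _).measure_preimage
    (isCompact_zonotope A).measurableSet.nullMeasurableSet]

lemma exists_hausdorffMeasure_zonotopeE_mul (P : Matrix (Fin n) (Fin d) ℝ) :
    ∃ C : ℝ≥0∞, ∀ {k : ℕ} (A : Matrix (Fin d) (Fin k) ℝ),
      μH[d] (zonotopeE (P * A)) = C * volume (zonotope A) := by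
  have : (μH[d] : Measure (EuclideanSpace ℝ (Fin d))).IsAddHaarMeasure := by
    simpa using isAddHaarMeasure_hausdorffMeasure (E := EuclideanSpace ℝ (Fin d))
  obtain ⟨c, hc⟩ : ∃ c : ℝ≥0∞, (μH[d] : Measure (EuclideanSpace ℝ (Fin d))) = c • volume :=
    ⟨_, Measure.isAddLeftInvariant_eq_smul _ _⟩
  refine ⟨ENNReal.ofReal P.toEuclideanLin.normDet * c, fun A => ?_⟩
  have image_measure := P.toEuclideanLin.hausdorffMeasure_image (zonotopeE A)
  rw [finrank_euclideanSpace_fin] at image_measure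
  rw [zonotopeE_mul, image_measure, hc, Measure.smul_apply, volume_zonotopeE,
    smul_eq_mul, mul_assoc]

end Hausdorff

section Star

/-- The incidence matrix of the star with centre `0` and leaves `1, …, d`, its edges directed
outwards. Its columns are a basis of the hyperplane of vectors with sum zero. -/
def starIncidence (R : Type*) [Ring R] (d : ℕ) : Matrix (Fin (d + 1)) (Fin d) R :=
  signedIncidence R Fin.succ 0

section Ring

variable {R : Type*} [Ring R] {d : ℕ}

lemma starIncidence_zero_apply (j : Fin d) : starIncidence R d 0 j = -1 := by
  simp [starIncidence, signedIncidence]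

lemma starIncidence_succ_apply (i j : Fin d) :
    starIncidence R d i.succ j = (1 : Matrix (Fin d) (Fin d) R) i j := by
  simp [starIncidence, signedIncidence, Pi.single_apply, one_apply]

lemma eq_starIncidence_mul {κ : Type*} {N : Matrix (Fin (d + 1)) κ R} (hN : 1 ᵥ* N = 0) :
    N = starIncidence R d * N.submatrix Fin.succ id := by
  ext i j
  have col_sum : N 0 j + ∑ i : Fin d, N i.succ j = 0 := by
    simpa [vecMul, dotProduct, Fin.sum_univ_succ] using congrFun hN j
  refine i.cases ?_ fun i => ?_
  · simpa [mul_apply, starIncidence_zero_apply] using eq_neg_of_add_eq_zero_left col_sum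
  · simp [mul_apply, starIncidence_succ_apply, one_apply]

end Ring

variable {R : Type*} [CommRing R] {d : ℕ}

lemma isTotallyUnimodular_starIncidence : (starIncidence R d).IsTotallyUnimodular :=
  isTotallyUnimodular_signedIncidence _ _

lemma det_transpose_mul_starIncidence :
    ((starIncidence R d)ᵀ * starIncidence R d).det = d + 1 := by
  have gram_eq : (starIncidence R d)ᵀ * starIncidence R d =
      1 + (replicateCol Unit 1 : Matrix _ _ R) * (replicateRow Unit 1 : Matrix _ _ R) := by
    ext i j
    simp [mul_apply, Fin.sum_univ_succ, starIncidence_zero_apply, starIncidence_succ_apply,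
      one_apply, eq_comm, add_comm]
  rw [gram_eq, det_one_add_replicateCol_mul_replicateRow]
  simp [add_comm]

end Star

theorem stmt16_general {n m : ℕ} (hn : n ≠ 0) {N : Matrix (Fin n) (Fin m) ℝ}
    (hunimod : N.IsTotallyUnimodular) (hsum : 1 ᵥ* N = 0) :
    μH[((n : ℝ) - 1)] (zonotopeE (N * Nᵀ)) = (n : ℝ≥0∞) * μH[((n : ℝ) - 1)] (zonotopeE N) := by
  obtain ⟨d, rfl⟩ := Nat.exists_eq_succ_of_ne_zero hn
  set S := starIncidence ℝ d
  set R := N.submatrix Fin.succ id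
  have hNSR : N = S * R := eq_starIncidence_mul hsum
  have hL : N * Nᵀ = S * (R * Rᵀ * Sᵀ) := by
    simp only [hNSR, transpose_mul, Matrix.mul_assoc]
  have volume_R : volume (zonotope R) = ENNReal.ofReal |(R * Rᵀ).det| := by
    rw [volume_zonotope_of_isTotallyUnimodular (hunimod.submatrix _ _), abs_of_nonneg]
    exact (posSemidef_self_mul_conjTranspose R).det_nonneg
  have volume_S : volume (zonotope Sᵀ) = (d + 1 : ℕ) := by
    rw [volume_zonotope_of_isTotallyUnimodular
      isTotallyUnimodular_starIncidence.transpose, transpose_transpose,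
      det_transpose_mul_starIncidence]
    exact_mod_cast ENNReal.ofReal_natCast (d + 1)
  obtain ⟨C, hC⟩ := exists_hausdorffMeasure_zonotopeE_mul S
  have dim_eq : ((d + 1 : ℕ) : ℝ) - 1 = d := by simp
  rw [dim_eq, hL, hC, hNSR, hC, volume_zonotope_mul, volume_S, volume_R]
  ring

/-- For a connected simple graph `G` on `n` vertices with an orientation of its
`m` edges, signed incidence matrix `N` and Laplacian `L = N Nᵀ`, the
`(n−1)`-dimensional Hausdorff measure of the zonotope `Z(L)` is `n` times that
of the zonotope `Z(N)`. -/
theorem stmt16 (n m : ℕ) (G : SimpleGraph (Fin n)) [DecidableRel G.Adj]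
    (hconn : G.Connected)
    (head tail : Fin m → Fin n)
    (hedge : ∀ j, s(head j, tail j) ∈ G.edgeSet)
    (hinj : Function.Injective (fun j => s(head j, tail j)))
    (hsurj : ∀ e ∈ G.edgeSet, ∃ j, s(head j, tail j) = e)
    (N : Matrix (Fin n) (Fin m) ℝ)
    (hN : N = fun v j => if v = head j then (1 : ℝ) else if v = tail j then -1 else 0)
    (L : Matrix (Fin n) (Fin n) ℝ) (hL : L = N * N.transpose) :
    μH[((n : ℝ) - 1)] (zonotopeE L) = (n : ENNReal) * μH[((n : ℝ) - 1)] (zonotopeE N) := by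
  have hne : ∀ j, head j ≠ tail j := fun j => G.ne_of_adj (hedge j)
  obtain rfl : N = signedIncidence ℝ head tail := hN.trans (signedIncidence_eq_ite hne).symm
  exact hL ▸ stmt16_general (Fin.pos_iff_nonempty.mpr hconn.nonempty).ne'
    (isTotallyUnimodular_signedIncidence head tail) (one_vecMul_signedIncidence head tail)
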